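/- In the marked setup below, let λ be a nonnegative dominant marking with decomposition coefficients α_K(λ), and let S = Σ_{K∈𝒥*} α_K(λ). Then every integer point x ∈ ℤ^P with x ∈ R_λ(P,<,<') can be uniquely expressed in the form x = 1_{max_{<'} J_1} + ⋯ + 1_{max_{<'} J_S}, where J_1 ⊆ ⋯ ⊆ J_S is a weakly increasing tuple in 𝒥 such that for every K ∈ 𝒥* exactly α_K(λ) of the order ideals J_i satisfy J_i ∩ P* = K. -/

import Mathlib

open Pointwise

/-- `J` is an order ideal (lower set) with respect to the strict order relation `r`. -/
def IsLowerIdeal {P : Type*} (r : P → P → Prop) (J : Set P) : Prop :=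
  ∀ ⦃p q : P⦄, r p q → q ∈ J → p ∈ J

/-- The set of `r`-maximal elements of `J`. -/
def maxElems {P : Type*} (r : P → P → Prop) (J : Set P) : Set P :=
  {p ∈ J | ∀ q ∈ J, ¬ r p q}

/-- The 0/1 indicator vector of `A ⊆ P`, as a point of `ℝ^P`. -/
noncomputable def ind {P : Type*} (A : Set P) : P → ℝ :=
  A.indicator 1

/-- The order ideal of `(P, r)` generated by `A`. -/
def genIdeal {P : Type*} (r : P → P → Prop) (A : Set P) : Set P :=
  {p | ∃ q ∈ A, p = q ∨ r p q}

/-- The Hibi–Li operation `J1 *' J2` relative to the order `r`: the order ideal of `(P, r)`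
generated by `(J1 ∩ J2) ∩ (max_r J1 ∪ max_r J2)`. -/
def starOp {P : Type*} (r : P → P → Prop) (J1 J2 : Set P) : Set P :=
  genIdeal r ((J1 ∩ J2) ∩ (maxElems r J1 ∪ maxElems r J2))

/-- The relative poset polytope `R(P, lt, lt')`: the convex hull of the points
`1_{max_{lt'} J}` over all order ideals `J` of `(P, lt)`. -/
noncomputable def RPP {P : Type*} (lt lt' : P → P → Prop) : Set (P → ℝ) :=
  convexHull ℝ {x | ∃ J : Set P, IsLowerIdeal lt J ∧ x = ind (maxElems lt' J)}

/-- The dilation `m·Q = {m·x : x ∈ Q}`. -/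
def dilate {P : Type*} (m : ℕ) (Q : Set (P → ℝ)) : Set (P → ℝ) :=
  (fun x => (m : ℝ) • x) '' Q

/-- The order polytope of `(P, lt)`. -/
def orderPolytope {P : Type*} (lt : P → P → Prop) : Set (P → ℝ) :=
  {x | (∀ p, 0 ≤ x p ∧ x p ≤ 1) ∧ ∀ p q, lt q p → x p ≤ x q}

/-- The chain polytope of `(P, lt)`. -/
def chainPolytope {P : Type*} (lt : P → P → Prop) : Set (P → ℝ) :=
  {x | (∀ p, 0 ≤ x p) ∧ ∀ (k : ℕ) (c : Fin k → P),
    (∀ i j : Fin k, i < j → lt (c i) (c j)) → (∑ i, x (c i)) ≤ 1}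


/-- The fundamental marked relative poset polytope `R_{ω_K}(P, lt, lt')`: the convex hull
of the points `1_{max_{lt'} J}` over order ideals `J` of `(P, lt)` with `J ∩ P* = K`. -/
noncomputable def RPPfund {P : Type*} (lt lt' : P → P → Prop) (Pstar K : Set P) :
    Set (P → ℝ) :=
  convexHull ℝ
    {x | ∃ J : Set P, IsLowerIdeal lt J ∧ J ∩ Pstar = K ∧ x = ind (maxElems lt' J)}

/-- The set `𝒥*` of order ideals of the subposet `(P*, lt)`. -/
def idealsOn {P : Type*} (lt : P → P → Prop) (Pstar : Set P) : Set (Set P) :=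
  {K | K ⊆ Pstar ∧ ∀ p q : P, p ∈ Pstar → q ∈ Pstar → lt p q → q ∈ K → p ∈ K}

/-- The marked relative poset polytope for a coefficient function `α : 𝒥* → ℕ`:
the Minkowski sum `Σ_{K ∈ 𝒥*} α_K · R_{ω_K}(P, lt, lt')`. -/
noncomputable def RPPmarked {P : Type*} [Fintype P] (lt lt' : P → P → Prop)
    (Pstar : Set P) (α : Set P → ℕ) : Set (P → ℝ) :=
  ∑ K ∈ (Set.toFinite (idealsOn lt Pstar)).toFinset, dilate (α K) (RPPfund lt lt' Pstar K)

/-! Uncrossing two incomparable order ideals `J₁, J₂` into `J₁ ∪ J₂` and `J₁ *' J₂` preserves the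
sum of the vectors `1_{max J}` and increases the sum of `2 ^ |J|`, so a convex combination
`∑ w_J 1_{max J}` with the largest `∑ w_J 2 ^ |J|` is supported on a chain. On a chain,
`x = ∑ w_J 1_{max J}` is obtained from the point `z = ∑ w_J 1_J` of the order polytope by the
transfer `x p = z p - max {0, z q | p <' q}`: the maximum is attained at any `q` above `p` in the
smallest member of the chain that has elements above `p`. The transfer is inverted by recursion down
from the `<'`-maximal elements, so `x` determines `z`, and integrality of `x` forces integrality of
`z`. An integral `z` with values in `[0, S]` which reverses `<` is the sum of the indicators of its
superlevel sets, and of no other increasing tuple of `S` ideals. Finally `x = z = λ` on `P*`, so the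
traces of the `J_i` on `P*` are the ideals in the decomposition of `λ`. -/

section ConvexGeometry

theorem sum_smul_eq_of_convex {ι 𝕜 E : Type*} [Field 𝕜] [LinearOrder 𝕜] [IsStrictOrderedRing 𝕜]
    [AddCommGroup E] [Module 𝕜 E] {Q : Set E} (hQ : Convex 𝕜 Q) (hne : Q.Nonempty)
    (s : Finset ι) {a : ι → 𝕜} (ha : ∀ i ∈ s, 0 ≤ a i) :
    ∑ i ∈ s, a i • Q = (∑ i ∈ s, a i) • Q := by
  classical
  induction s using Finset.induction_on with
  | empty => simp only [Finset.sum_empty, Set.zero_smul_set hne]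
  | insert i s hi ih =>
    have has : ∀ j ∈ s, 0 ≤ a j := fun j hj => ha j (Finset.mem_insert_of_mem hj)
    rw [Finset.sum_insert hi, Finset.sum_insert hi, ih has,
      hQ.add_smul (ha i (Finset.mem_insert_self i s)) (Finset.sum_nonneg has)]

theorem convexHull_range_eq_image_stdSimplex {ι 𝕜 E : Type*} [Fintype ι] [Field 𝕜] [LinearOrder 𝕜]
    [IsStrictOrderedRing 𝕜] [AddCommGroup E] [Module 𝕜 E] (v : ι → E) :
    convexHull 𝕜 (Set.range v) = (fun w => ∑ i, w i • v i) '' stdSimplex 𝕜 ι := by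
  classical
  change _ = Fintype.linearCombination 𝕜 v '' _
  rw [← convexHull_rangle_single_eq_stdSimplex, LinearMap.image_convexHull, ← Set.range_comp]
  congr 2
  ext i
  simp [Fintype.linearCombination_apply_single]

section Exchange

variable {ι : Type*} [DecidableEq ι]

/-- The weights obtained from `w` by moving mass `ε` from each of `i` and `j` to `k` and `l`. -/
def exchange (w : ι → ℝ) (ε : ℝ) (i j k l : ι) : ι → ℝ :=
  w + ε • (Pi.single k 1 + Pi.single l 1 - Pi.single i 1 - Pi.single j 1)

theorem exchange_nonneg {w : ι → ℝ} (hw : 0 ≤ w) {ε : ℝ} (hε : 0 ≤ ε) {i j : ι}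
    (hi : ε ≤ w i / 2) (hj : ε ≤ w j / 2) (k l : ι) : 0 ≤ exchange w ε i j k l := by
  intro a
  have hadded (b : ι) : 0 ≤ ε * (Pi.single b 1 : ι → ℝ) a :=
    mul_nonneg hε ((Pi.single_nonneg.2 zero_le_one : (0 : ι → ℝ) ≤ Pi.single b 1) a)
  -- Half of `w a` pays for each removal, so `i = j` needs no separate treatment.
  have hremoved {b : ι} (hb : ε ≤ w b / 2) : ε * (Pi.single b 1 : ι → ℝ) a ≤ w a / 2 := by
    rcases eq_or_ne a b with rfl | hab
    · simpa using hb
    · simpa [hab] using div_nonneg (hw a) zero_le_two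
  have := hadded k
  have := hadded l
  have := hremoved hi
  have := hremoved hj
  simp only [exchange, Pi.zero_apply, Pi.add_apply, Pi.sub_apply, Pi.smul_apply, smul_eq_mul,
    mul_add, mul_sub]
  linarith

theorem sum_exchange_smul [Fintype ι] {E : Type*} [AddCommGroup E] [Module ℝ E] (w : ι → ℝ)
    (ε : ℝ) (i j k l : ι) (v : ι → E) :
    ∑ a, exchange w ε i j k l a • v a = ∑ a, w a • v a + ε • (v k + v l - v i - v j) := by
  simp only [← Fintype.linearCombination_apply, exchange, map_add, map_sub, map_smul,
    Fintype.linearCombination_apply_single, one_smul]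

theorem exchange_mem_stdSimplex [Fintype ι] {w : ι → ℝ} (hw : w ∈ stdSimplex ℝ ι) {ε : ℝ}
    (hε : 0 ≤ ε) {i j : ι} (hi : ε ≤ w i / 2) (hj : ε ≤ w j / 2) (k l : ι) :
    exchange w ε i j k l ∈ stdSimplex ℝ ι := by
  refine ⟨exchange_nonneg hw.1 hε hi hj k l, ?_⟩
  simpa [hw.2] using sum_exchange_smul w ε i j k l (fun _ => (1 : ℝ))

end Exchange

variable {ι E : Type*} [Fintype ι] [AddCommGroup E] [Module ℝ E] {v : ι → E}

theorem exists_sum_smul_eq_and_sum_mul_lt {w : ι → ℝ} (hw : w ∈ stdSimplex ℝ ι) {i j k l : ι}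
    (hi : w i ≠ 0) (hj : w j ≠ 0) (hv : v k + v l = v i + v j) {φ : ι → ℝ}
    (hφ : φ i + φ j < φ k + φ l) :
    ∃ w' ∈ stdSimplex ℝ ι, ∑ a, w' a • v a = ∑ a, w a • v a ∧
      ∑ a, w a * φ a < ∑ a, w' a * φ a := by
  classical
  obtain ⟨ε, hε, hεi, hεj⟩ : ∃ ε, 0 < ε ∧ ε ≤ w i / 2 ∧ ε ≤ w j / 2 :=
    ⟨min (w i / 2) (w j / 2), lt_min (half_pos ((hw.1 i).lt_of_ne' hi))
      (half_pos ((hw.1 j).lt_of_ne' hj)), min_le_left _ _, min_le_right _ _⟩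
  refine ⟨exchange w ε i j k l, exchange_mem_stdSimplex hw hε.le hεi hεj k l, ?_, ?_⟩
  · rw [sum_exchange_smul, hv, add_sub_cancel_left, sub_self, smul_zero, add_zero]
  · simp only [← smul_eq_mul]
    rw [sum_exchange_smul]
    exact lt_add_of_pos_right _ (mul_pos hε (by linarith))

theorem exists_mem_stdSimplex_pairwise_of_exchange [TopologicalSpace E] [ContinuousAdd E]
    [ContinuousSMul ℝ E] [T1Space E] (φ : ι → ℝ) {r : ι → ι → Prop}
    (hexch : ∀ i j, ¬ r i j → ∃ k l, v k + v l = v i + v j ∧ φ i + φ j < φ k + φ l)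
    {y : E} (hy : y ∈ convexHull ℝ (Set.range v)) :
    ∃ w ∈ stdSimplex ℝ ι, ∑ i, w i • v i = y ∧ ∀ i j, w i ≠ 0 → w j ≠ 0 → r i j := by
  let R : Set (ι → ℝ) := stdSimplex ℝ ι ∩ (fun w => ∑ i, w i • v i) ⁻¹' {y}
  have hR : IsCompact R := (isCompact_stdSimplex ℝ ι).inter_right <|
    isClosed_singleton.preimage (by fun_prop)
  have hRne : R.Nonempty := by
    rw [convexHull_range_eq_image_stdSimplex] at hy
    exact hy
  obtain ⟨w, ⟨hw, hwy⟩, hmax⟩ := hR.exists_isMaxOn hRne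
    (f := fun w => ∑ i, w i * φ i) (by fun_prop)
  refine ⟨w, hw, hwy, fun i j hi hj => ?_⟩
  by_contra hij
  obtain ⟨k, l, hv, hφ⟩ := hexch i j hij
  obtain ⟨w', hw', hw'v, hlt⟩ := exists_sum_smul_eq_and_sum_mul_lt hw hi hj hv hφ
  exact (hmax ⟨hw', hw'v.trans hwy⟩).not_gt hlt

end ConvexGeometry

section MonotoneTuples

theorem mem_iff_le_add_card_of_monotone {P : Type*} {n : ℕ} {J : Fin n → Set P} (hJ : Monotone J)
    (p : P) [DecidablePred fun j => p ∈ J j] (i : Fin n) :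
    p ∈ J i ↔ n ≤ i + Finset.card {j | p ∈ J j} := by
  constructor
  · intro hp
    have hsub : Finset.Ici i ⊆ ({j | p ∈ J j} : Finset (Fin n)) := fun j hj => by
      simpa using hJ (Finset.mem_Ici.1 hj) hp
    have := Finset.card_le_card hsub
    rw [Fin.card_Ici] at this
    omega
  · intro hn
    by_contra hp
    have hsub : ({j | p ∈ J j} : Finset (Fin n)) ⊆ Finset.Ioi i := fun j hj => by
      by_contra hij
      exact hp (hJ (not_lt.1 (Finset.mem_Ioi.not.1 hij)) (by simpa using hj))
    have := Finset.card_le_card hsub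
    rw [Fin.card_Ioi] at this
    omega

theorem sum_ind_apply {ι P : Type*} [Fintype ι] (J : ι → Set P) (p : P)
    [DecidablePred fun i => p ∈ J i] :
    ∑ i, ind (J i) p = (Finset.card {i | p ∈ J i} : ℝ) := by
  simp [ind, Set.indicator_apply]

theorem eq_of_sum_ind_eq_of_monotone {P : Type*} {n : ℕ} {J L : Fin n → Set P} (hJ : Monotone J)
    (hL : Monotone L) (h : ∑ i, ind (J i) = ∑ i, ind (L i)) : J = L := by
  classical
  ext i p
  have hp := congrFun h p
  rw [Finset.sum_apply, Finset.sum_apply, sum_ind_apply, sum_ind_apply, Nat.cast_inj] at hp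
  rw [mem_iff_le_add_card_of_monotone hJ, mem_iff_le_add_card_of_monotone hL, hp]

/-- The superlevel sets `{p | n - i ≤ w p}`, `i < n`, of a function `w : P → ℕ`, as an increasing
`n`-tuple. The inequality is stated without subtraction in `ℕ`. -/
def levelTuple {P : Type*} (n : ℕ) (w : P → ℕ) (i : Fin n) : Set P :=
  {p | n ≤ i + w p}

theorem mem_levelTuple {P : Type*} {n : ℕ} {w : P → ℕ} {i : Fin n} {p : P} :
    p ∈ levelTuple n w i ↔ n ≤ i + w p :=
  Iff.rfl

theorem monotone_levelTuple {P : Type*} (n : ℕ) (w : P → ℕ) : Monotone (levelTuple n w) :=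
  fun _ _ hij _ hp => hp.trans (Nat.add_le_add_right hij _)

theorem sum_ind_levelTuple {P : Type*} {n : ℕ} {w : P → ℕ} (hw : ∀ p, w p ≤ n) :
    ∑ i, ind (levelTuple n w i) = fun p => (w p : ℝ) := by
  classical
  ext p
  have hIco : (Finset.range n).filter (fun i => n ≤ i + w p) = Finset.Ico (n - w p) n := by
    ext i
    simp only [Finset.mem_filter, Finset.mem_range, Finset.mem_Ico]
    omega
  rw [Finset.sum_apply]
  simp only [ind, Set.indicator_apply, mem_levelTuple, Pi.one_apply]
  rw [Fin.sum_univ_eq_sum_range (fun i => if n ≤ i + w p then (1 : ℝ) else 0), Finset.sum_boole,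
    hIco, Nat.card_Ico, Nat.sub_sub_self (hw p)]

theorem exists_monotone_card_fiber_eq {β : Type*} [PartialOrder β] (F : Finset β) (α : β → ℕ)
    (hα : ∀ a ∈ F, ∀ b ∈ F, α a ≠ 0 → α b ≠ 0 → a ≤ b ∨ b ≤ a) :
    ∃ L : Fin (∑ b ∈ F, α b) → β, Monotone L ∧ (∀ i, L i ∈ F) ∧
      ∀ b ∈ F, Nat.card {i // L i = b} = α b := by
  have hcard : Fintype.card (Σ b : F, Fin (α b)) = ∑ b ∈ F, α b := by
    simpa using Finset.sum_attach F α
  let e := (Fintype.equivFinOfCardEq hcard).symm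
  let key (i : Fin (∑ b ∈ F, α b)) := toLinearExtension ((e i).1 : β)
  let σ := (Tuple.sort key).trans e
  have hσ : Monotone fun i => toLinearExtension ((σ i).1 : β) := Tuple.monotone_sort key
  have hpos (i) : α (σ i).1 ≠ 0 := (Fin.pos (σ i).2).ne'
  refine ⟨fun i => (σ i).1, fun i j hij => ?_, fun i => (σ i).1.2, fun b hb => ?_⟩
  · refine (hα _ (σ i).1.2 _ (σ j).1.2 (hpos i) (hpos j)).elim id fun h => ?_
    have heq : ((σ i).1 : β) = (σ j).1 := (hσ hij).antisymm (toLinearExtension.monotone h)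
    exact heq.le
  · let ε : {i // ((σ i).1 : β) = b} ≃ {s : Σ b : F, Fin (α b) // s.1 = ⟨b, hb⟩} :=
      σ.subtypeEquiv fun i => by rw [Subtype.ext_iff]
    rw [Nat.card_congr (ε.trans (Equiv.sigmaSubtype (⟨b, hb⟩ : F))), Nat.card_fin]

theorem sum_comp_eq_sum_nsmul_of_card_fiber {ι β M : Type*} [Fintype ι] [AddCommMonoid M]
    {F : Finset β} {α : β → ℕ} {L : ι → β} (hF : ∀ i, L i ∈ F)
    (hα : ∀ b ∈ F, Nat.card {i // L i = b} = α b) (g : β → M) :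
    ∑ i, g (L i) = ∑ b ∈ F, α b • g b := by
  classical
  rw [← Finset.sum_fiberwise_of_maps_to' (fun i _ => hF i) g]
  refine Finset.sum_congr rfl fun b hb => ?_
  rw [Finset.sum_const, ← hα b hb, Nat.card_eq_fintype_card, Fintype.card_subtype]

end MonotoneTuples

section Transfer

variable {P : Type*} {r : P → P → Prop}

/-- The transfer relation of `(P, r)`: `x` is obtained from `z` by subtracting from each `z p` the
largest of `0` and the `z q` with `r p q`. It is a relation, not a map, so that it makes sense
when such a maximum need not exist. -/
def IsTransfer {M : Type*} [AddGroup M] [Preorder M] (r : P → P → Prop) (z x : P → M) : Prop :=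
  ∀ p, IsGreatest (insert 0 (z '' {q | r p q})) (z p - x p)

namespace IsTransfer

variable {M : Type*} [AddGroup M]

theorem right_unique [PartialOrder M] {z x x' : P → M} (h : IsTransfer r z x)
    (h' : IsTransfer r z x') : x = x' :=
  funext fun p => sub_right_injective ((h p).unique (h' p))

theorem left_unique [PartialOrder M] (hr : WellFounded (Function.swap r)) {z z' x : P → M}
    (h : IsTransfer r z x) (h' : IsTransfer r z' x) : z = z' := by
  funext p
  induction p using hr.induction with
  | _ p ih =>
    have himage : z '' {q | r p q} = z' '' {q | r p q} := Set.image_congr ih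
    have hgreatest := h p
    rw [himage] at hgreatest
    exact sub_left_injective (hgreatest.unique (h' p))

theorem apply_mem [Preorder M] (hr : WellFounded (Function.swap r)) {z x : P → M}
    (h : IsTransfer r z x) {H : AddSubgroup M} (hx : ∀ p, x p ∈ H) (p : P) : z p ∈ H := by
  induction p using hr.induction with
  | _ p ih =>
    have hdiff : z p - x p ∈ H := by
      rcases (h p).1 with h0 | ⟨q, hq, hzq⟩
      · exact h0 ▸ H.zero_mem
      · exact hzq ▸ ih q hq
    exact sub_add_cancel (z p) (x p) ▸ H.add_mem hdiff (hx p)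

end IsTransfer

theorem IsTransfer.smul {z x : P → ℝ} (h : IsTransfer r z x) {c : ℝ} (hc : 0 ≤ c) :
    IsTransfer r (c • z) (c • x) := by
  intro p
  have hscaled := (monotone_mul_left_of_nonneg hc).map_isGreatest (h p)
  rw [Set.image_insert_eq, Set.image_image, mul_zero, mul_sub] at hscaled
  exact hscaled

end Transfer

section Ideals

variable {P : Type*} {r : P → P → Prop}

theorem ind_nonneg (A : Set P) (p : P) : 0 ≤ ind A p :=
  Set.indicator_nonneg (fun _ _ => zero_le_one) p

theorem ind_le_one (A : Set P) (p : P) : ind A p ≤ 1 :=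
  Set.indicator_le_self' (fun _ _ => zero_le_one) p

theorem ind_le_ind {A B : Set P} {p q : P} (h : p ∈ A → q ∈ B) : ind A p ≤ ind B q := by
  by_cases hp : p ∈ A
  · simp [ind, hp, h hp]
  · simpa [ind, hp] using ind_nonneg B q

theorem ind_congr {A B : Set P} {p q : P} (h : p ∈ A ↔ q ∈ B) : ind A p = ind B q :=
  (ind_le_ind h.1).antisymm (ind_le_ind h.2)

theorem maxElems_subset (J : Set P) : maxElems r J ⊆ J :=
  Set.sep_subset _ _

theorem IsLowerIdeal.mono {s : P → P → Prop} (hrs : ∀ p q, r p q → s p q) {J : Set P}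
    (hJ : IsLowerIdeal s J) : IsLowerIdeal r J :=
  fun _ _ hpq => hJ (hrs _ _ hpq)

theorem IsLowerIdeal.union {J₁ J₂ : Set P} (h₁ : IsLowerIdeal r J₁) (h₂ : IsLowerIdeal r J₂) :
    IsLowerIdeal r (J₁ ∪ J₂) :=
  fun _ _ hpq hq => hq.imp (h₁ hpq) (h₂ hpq)

theorem IsLowerIdeal.diff_maxElems {J : Set P} (hJ : IsLowerIdeal r J) :
    J \ maxElems r J = {p | ∃ q ∈ J, r p q} := by
  ext p
  constructor
  · rintro ⟨hp, hmax⟩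
    by_contra hnone
    exact hmax ⟨hp, fun q hq hpq => hnone ⟨q, hq, hpq⟩⟩
  · rintro ⟨q, hq, hpq⟩
    exact ⟨hJ hpq hq, fun hmax => hmax.2 q hq hpq⟩

theorem IsLowerIdeal.maxElems_union {J₁ J₂ : Set P} (h₁ : IsLowerIdeal r J₁)
    (h₂ : IsLowerIdeal r J₂) :
    maxElems r (J₁ ∪ J₂) = {p ∈ maxElems r J₁ ∪ maxElems r J₂ |
      (p ∈ J₁ → p ∈ maxElems r J₁) ∧ (p ∈ J₂ → p ∈ maxElems r J₂)} := by
  ext p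
  constructor
  · rintro ⟨hp, hmax⟩
    have hmax₁ (hp₁ : p ∈ J₁) : p ∈ maxElems r J₁ := ⟨hp₁, fun q hq => hmax q (Or.inl hq)⟩
    have hmax₂ (hp₂ : p ∈ J₂) : p ∈ maxElems r J₂ := ⟨hp₂, fun q hq => hmax q (Or.inr hq)⟩
    exact ⟨hp.imp hmax₁ hmax₂, hmax₁, hmax₂⟩
  · rintro ⟨hp, hmax₁, hmax₂⟩
    refine ⟨hp.imp (maxElems_subset J₁ ·) (maxElems_subset J₂ ·), ?_⟩
    rintro q (hq | hq) hpq
    · exact (hmax₁ (h₁ hpq hq)).2 q hq hpq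
    · exact (hmax₂ (h₂ hpq hq)).2 q hq hpq

theorem maxElems_starOp [IsTrans P r] (J₁ J₂ : Set P) :
    maxElems r (starOp r J₁ J₂) = J₁ ∩ J₂ ∩ (maxElems r J₁ ∪ maxElems r J₂) := by
  ext p
  constructor
  · rintro ⟨⟨q, hq, rfl | hpq⟩, hmax⟩
    · exact hq
    · exact absurd hpq (hmax q ⟨q, hq, Or.inl rfl⟩)
  · intro hp
    refine ⟨⟨p, hp, Or.inl rfl⟩, ?_⟩
    rintro q ⟨s, ⟨⟨hs₁, hs₂⟩, -⟩, hqs⟩ hpq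
    have hps : r p s := hqs.elim (fun h => h ▸ hpq) (fun h => _root_.trans hpq h)
    exact hp.2.elim (fun h => h.2 s hs₁ hps) (fun h => h.2 s hs₂ hps)

theorem ind_maxElems_union_add_ind_maxElems_starOp [IsTrans P r] {J₁ J₂ : Set P}
    (h₁ : IsLowerIdeal r J₁) (h₂ : IsLowerIdeal r J₂) :
    ind (maxElems r (J₁ ∪ J₂)) + ind (maxElems r (starOp r J₁ J₂)) =
      ind (maxElems r J₁) + ind (maxElems r J₂) := by
  have hsub₁ := maxElems_subset (r := r) J₁
  have hsub₂ := maxElems_subset (r := r) J₂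
  have hunion : maxElems r (J₁ ∪ J₂) ∪ maxElems r (starOp r J₁ J₂) =
      maxElems r J₁ ∪ maxElems r J₂ := by
    rw [h₁.maxElems_union h₂, maxElems_starOp]
    grind
  have hinter : maxElems r (J₁ ∪ J₂) ∩ maxElems r (starOp r J₁ J₂) =
      maxElems r J₁ ∩ maxElems r J₂ := by
    rw [h₁.maxElems_union h₂, maxElems_starOp]
    grind
  simp only [ind]
  rw [← Set.indicator_union_add_inter, hunion, hinter, Set.indicator_union_add_inter]

theorem two_pow_ncard_add_lt [Finite P] {A B : Set P} (hAB : ¬ A ⊆ B) (hBA : ¬ B ⊆ A) (C : Set P) :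
    (2 : ℝ) ^ A.ncard + 2 ^ B.ncard < 2 ^ (A ∪ B).ncard + 2 ^ C.ncard := by
  have hA : A.ncard < (A ∪ B).ncard := Set.ncard_lt_ncard <|
    Set.subset_union_left.ssubset_of_not_subset fun h => hBA (Set.union_subset_iff.1 h).2
  have hB : B.ncard < (A ∪ B).ncard := Set.ncard_lt_ncard <|
    Set.subset_union_right.ssubset_of_not_subset fun h => hAB (Set.union_subset_iff.1 h).1
  have hpow {k m : ℕ} (h : k < m) : (2 : ℝ) ^ k * 2 ≤ 2 ^ m := by
    rw [← pow_succ]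
    exact pow_le_pow_right₀ one_le_two h
  have hC : (0 : ℝ) < 2 ^ C.ncard := by positivity
  linarith [hpow hA, hpow hB]

theorem IsLowerIdeal.ind_sub_ind_maxElems {J : Set P} (hJ : IsLowerIdeal r J) :
    ind J - ind (maxElems r J) = ind {p | ∃ q ∈ J, r p q} := by
  rw [ind, ind, ← Set.indicator_sdiff (maxElems_subset J), hJ.diff_maxElems, ind]

theorem sum_smul_ind_mem_insert_zero_image {ι : Type*} [Fintype ι] {w : ι → ℝ} {J : ι → Set P}
    (hchain : ∀ i j, w i ≠ 0 → w j ≠ 0 → J i ⊆ J j ∨ J j ⊆ J i) (p : P) :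
    (∑ i, w i • ind {p | ∃ q ∈ J i, r p q}) p ∈
      insert 0 ((∑ i, w i • ind (J i)) '' {q | r p q}) := by
  let below (i : ι) : Set P := {p | ∃ q ∈ J i, r p q}
  rw [Finset.sum_apply]
  by_cases hne : ∃ i, w i ≠ 0 ∧ p ∈ below i
  · obtain ⟨i, ⟨hwi, q, hqi, hpq⟩, hmin⟩ :=
      Set.Finite.exists_minimalFor J {i | w i ≠ 0 ∧ p ∈ below i} (Set.toFinite _) hne
    refine Or.inr ⟨q, hpq, ?_⟩
    rw [Finset.sum_apply]
    refine Finset.sum_congr rfl fun j _ => ?_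
    by_cases hwj : w j = 0
    · simp only [hwj, zero_smul, Pi.zero_apply]
    have hiff : q ∈ J j ↔ p ∈ below j :=
      ⟨fun hqj => ⟨q, hqj, hpq⟩,
        fun hpj => (hchain i j hwi hwj).elim (· hqi) (hmin ⟨hwj, hpj⟩ · hqi)⟩
    exact congrArg (w j * ·) (ind_congr hiff)
  · push Not at hne
    refine Or.inl (Finset.sum_eq_zero fun i _ => ?_)
    by_cases hwi : w i = 0
    · rw [hwi, zero_smul, Pi.zero_apply]
    · rw [Pi.smul_apply, ind, Set.indicator_of_notMem (hne i hwi), smul_zero]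

theorem isTransfer_sum_smul_ind {ι : Type*} [Fintype ι] {w : ι → ℝ} (hw : ∀ i, 0 ≤ w i)
    {J : ι → Set P} (hJ : ∀ i, IsLowerIdeal r (J i))
    (hchain : ∀ i j, w i ≠ 0 → w j ≠ 0 → J i ⊆ J j ∨ J j ⊆ J i) :
    IsTransfer r (∑ i, w i • ind (J i)) (∑ i, w i • ind (maxElems r (J i))) := by
  intro p
  have hdiff : ∑ i, w i • ind (J i) - ∑ i, w i • ind (maxElems r (J i)) =
      ∑ i, w i • ind {p | ∃ q ∈ J i, r p q} := by
    simp only [← Finset.sum_sub_distrib, ← smul_sub, (hJ _).ind_sub_ind_maxElems]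
  rw [← Pi.sub_apply, hdiff]
  refine ⟨sum_smul_ind_mem_insert_zero_image hchain p, ?_⟩
  rintro _ (rfl | ⟨q, hpq, rfl⟩)
  · rw [Finset.sum_apply]
    exact Finset.sum_nonneg fun i _ => mul_nonneg (hw i) (ind_nonneg _ p)
  · rw [Finset.sum_apply, Finset.sum_apply]
    exact Finset.sum_le_sum fun i _ =>
      mul_le_mul_of_nonneg_left (ind_le_ind fun hq => ⟨q, hq, hpq⟩) (hw i)

theorem isTransfer_sum_ind_of_monotone {ι : Type*} [Fintype ι] [LinearOrder ι] {J : ι → Set P}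
    (hJ : ∀ i, IsLowerIdeal r (J i)) (hmono : Monotone J) :
    IsTransfer r (∑ i, ind (J i)) (∑ i, ind (maxElems r (J i))) := by
  simpa only [one_smul] using isTransfer_sum_smul_ind (w := fun _ => 1) (fun _ => zero_le_one) hJ
    fun i j _ _ => (le_total i j).imp (hmono ·) (hmono ·)

theorem isLowerIdeal_levelTuple {n : ℕ} {w : P → ℕ} (hw : ∀ p q, r p q → w q ≤ w p) (i : Fin n) :
    IsLowerIdeal r (levelTuple n w i) :=
  fun p q hpq hq => le_trans (mem_levelTuple.1 hq) (Nat.add_le_add_left (hw p q hpq) i)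

end Ideals

section RelativePosetPolytope

variable {P : Type*} {lt lt' : P → P → Prop}

theorem convex_orderPolytope (lt : P → P → Prop) : Convex ℝ (orderPolytope lt) := by
  intro x hx y hy a b ha hb hab
  refine ⟨fun p => convex_Icc (0 : ℝ) 1 (hx.1 p) (hy.1 p) ha hb hab, fun p q hqp => ?_⟩
  exact add_le_add (mul_le_mul_of_nonneg_left (hx.2 p q hqp) ha)
    (mul_le_mul_of_nonneg_left (hy.2 p q hqp) hb)

theorem ind_mem_orderPolytope {J : Set P} (hJ : IsLowerIdeal lt J) : ind J ∈ orderPolytope lt :=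
  ⟨fun p => ⟨ind_nonneg J p, ind_le_one J p⟩, fun _ _ hqp => ind_le_ind (hJ hqp)⟩

theorem RPP_eq_convexHull_range (lt lt' : P → P → Prop) :
    RPP lt lt' =
      convexHull ℝ (Set.range fun J : {J // IsLowerIdeal lt J} => ind (maxElems lt' J.1)) := by
  rw [RPP]
  congr 1
  ext x
  simp only [Set.mem_range, Subtype.exists, exists_prop, Set.mem_ofPred_eq, eq_comm]

theorem RPP_nonempty (lt lt' : P → P → Prop) : (RPP lt lt').Nonempty :=
  ⟨_, subset_convexHull ℝ _ ⟨∅, fun _ _ _ h => h, rfl⟩⟩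

theorem exists_mem_orderPolytope_isTransfer [Finite P] [IsTrans P lt']
    (hweak : ∀ p q, lt' p q → lt p q)
    (hstar : ∀ J₁ J₂ : Set P, IsLowerIdeal lt J₁ → IsLowerIdeal lt J₂ →
      IsLowerIdeal lt (starOp lt' J₁ J₂))
    {y : P → ℝ} (hy : y ∈ RPP lt lt') : ∃ z ∈ orderPolytope lt, IsTransfer lt' z y := by
  have := Fintype.ofFinite {J // IsLowerIdeal lt J}
  rw [RPP_eq_convexHull_range] at hy
  obtain ⟨w, hw, rfl, hchain⟩ := exists_mem_stdSimplex_pairwise_of_exchange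
    (fun J => 2 ^ J.1.ncard) (r := fun J₁ J₂ => J₁.1 ⊆ J₂.1 ∨ J₂.1 ⊆ J₁.1)
    (fun J₁ J₂ hJ => by
      rw [not_or] at hJ
      exact ⟨⟨_, J₁.2.union J₂.2⟩, ⟨_, hstar _ _ J₁.2 J₂.2⟩,
        ind_maxElems_union_add_ind_maxElems_starOp (J₁.2.mono hweak) (J₂.2.mono hweak),
        two_pow_ncard_add_lt hJ.1 hJ.2 _⟩) hy
  exact ⟨∑ J, w J • ind J.1,
    (convex_orderPolytope lt).sum_mem (fun J _ => hw.1 J) hw.2 fun J _ => ind_mem_orderPolytope J.2,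
    isTransfer_sum_smul_ind hw.1 (fun J => J.2.mono hweak) hchain⟩

theorem IsTransfer.exists_eq_natCast [Finite P] [IsStrictOrder P lt'] {z : P → ℝ} {x : P → ℤ}
    (h : IsTransfer lt' z fun p => (x p : ℝ)) (hz : ∀ p, 0 ≤ z p) :
    ∃ w : P → ℕ, z = fun p => (w p : ℝ) := by
  have hnat (p : P) : ∃ k : ℕ, z p = k := by
    obtain ⟨m, hm⟩ := h.apply_mem (Finite.wellFounded_of_trans_of_irrefl _)
      (H := (Int.castAddHom ℝ).range) (fun q => ⟨x q, rfl⟩) p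
    have hm : (m : ℝ) = z p := hm
    lift m to ℕ using Int.cast_nonneg_iff.1 (hm ▸ hz p)
    exact ⟨m, hm.symm⟩
  choose w hw using hnat
  exact ⟨w, funext hw⟩

theorem existsUnique_monotone_sum_ind_maxElems [Finite P] [IsStrictOrder P lt']
    (hweak : ∀ p q, lt' p q → lt p q)
    (hstar : ∀ J₁ J₂ : Set P, IsLowerIdeal lt J₁ → IsLowerIdeal lt J₂ →
      IsLowerIdeal lt (starOp lt' J₁ J₂))
    {n : ℕ} {x : P → ℤ} (hx : (fun p => (x p : ℝ)) ∈ dilate n (RPP lt lt')) :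
    ∃! J : Fin n → Set P, (∀ i, IsLowerIdeal lt (J i)) ∧ Monotone J ∧
      (fun p => (x p : ℝ)) = ∑ i, ind (maxElems lt' (J i)) := by
  obtain ⟨y, hy, hyx⟩ := hx
  obtain ⟨z, hz, hzy⟩ := exists_mem_orderPolytope_isTransfer hweak hstar hy
  have hzx := hzy.smul n.cast_nonneg
  rw [show (n : ℝ) • y = _ from hyx] at hzx
  obtain ⟨w, hw⟩ := hzx.exists_eq_natCast fun p => mul_nonneg n.cast_nonneg (hz.1 p).1
  have hwz (p : P) : (w p : ℝ) = n * z p := (congrFun hw p).symm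
  have hwn (p : P) : w p ≤ n := by
    have : (w p : ℝ) ≤ n := hwz p ▸ mul_le_of_le_one_right n.cast_nonneg (hz.1 p).2
    exact_mod_cast this
  have hwanti (p q : P) (hpq : lt p q) : w q ≤ w p := by
    have : (w q : ℝ) ≤ w p := by
      rw [hwz, hwz]
      exact mul_le_mul_of_nonneg_left (hz.2 q p hpq) n.cast_nonneg
    exact_mod_cast this
  have hsum : ∑ i, ind (levelTuple n w i) = (n : ℝ) • z := (sum_ind_levelTuple hwn).trans hw.symm
  have hideal := isLowerIdeal_levelTuple (n := n) hwanti
  have hmono := monotone_levelTuple n w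
  refine ⟨levelTuple n w, ⟨hideal, hmono, ?_⟩, ?_⟩
  · have := isTransfer_sum_ind_of_monotone (fun i => (hideal i).mono hweak) hmono
    exact hzx.right_unique (hsum ▸ this)
  · rintro J ⟨hJ, hJmono, hxJ⟩
    have hJx := isTransfer_sum_ind_of_monotone (fun i => (hJ i).mono hweak) hJmono
    rw [← hxJ] at hJx
    refine eq_of_sum_ind_eq_of_monotone hJmono hmono (.trans ?_ hsum.symm)
    exact hJx.left_unique (Finite.wellFounded_of_trans_of_irrefl _) hzx

end RelativePosetPolytope

section Marked

variable {P : Type*} {lt lt' : P → P → Prop} {Pstar : Set P}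

theorem RPPfund_subset_RPP (lt lt' : P → P → Prop) (Pstar K : Set P) :
    RPPfund lt lt' Pstar K ⊆ RPP lt lt' :=
  convexHull_mono fun _ ⟨J, hJ, _, hx⟩ => ⟨J, hJ, hx⟩

theorem RPPmarked_subset_dilate_RPP [Fintype P] (lt lt' : P → P → Prop) (Pstar : Set P)
    (α : Set P → ℕ) :
    RPPmarked lt lt' Pstar α ⊆
      dilate (∑ K ∈ (Set.toFinite (idealsOn lt Pstar)).toFinset, α K) (RPP lt lt') := by
  have hconvex : Convex ℝ (RPP lt lt') := convex_convexHull ℝ _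
  calc RPPmarked lt lt' Pstar α
      ⊆ ∑ K ∈ (Set.toFinite (idealsOn lt Pstar)).toFinset, (α K : ℝ) • RPP lt lt' :=
        Set.finsetSum_subset_finsetSum _ _ _ fun K _ =>
          Set.image_mono (RPPfund_subset_RPP lt lt' Pstar K)
    _ = dilate (∑ K ∈ (Set.toFinite (idealsOn lt Pstar)).toFinset, α K) (RPP lt lt') := by
        rw [sum_smul_eq_of_convex hconvex (RPP_nonempty lt lt') _
          fun K _ => (α K).cast_nonneg, ← Nat.cast_sum]
        rfl

theorem mem_maxElems_iff {J : Set P} {p : P} (hp : ∀ q, ¬ lt' p q) : p ∈ maxElems lt' J ↔ p ∈ J :=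
  and_iff_left fun q _ => hp q

theorem apply_eq_ind_of_mem_RPPfund {K : Set P} {y : P → ℝ} (hy : y ∈ RPPfund lt lt' Pstar K)
    {p : P} (hp : p ∈ Pstar) (hpmax : ∀ q, ¬ lt' p q) : y p = ind K p := by
  have hconvex : Convex ℝ {y : P → ℝ | y p = ind K p} :=
    convex_hyperplane (LinearMap.proj (R := ℝ) p).isLinear _
  refine convexHull_min ?_ hconvex hy
  rintro _ ⟨J, -, rfl, rfl⟩
  exact ind_congr ((mem_maxElems_iff hpmax).trans (and_iff_left hp).symm)

theorem apply_eq_sum_of_mem_RPPmarked [Fintype P] {α : Set P → ℕ} {x : P → ℝ}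
    (hx : x ∈ RPPmarked lt lt' Pstar α) {p : P} (hp : p ∈ Pstar) (hpmax : ∀ q, ¬ lt' p q) :
    x p = ∑ K ∈ (Set.toFinite (idealsOn lt Pstar)).toFinset, α K • ind K p := by
  obtain ⟨g, hg, rfl⟩ := (Set.mem_finsetSum _ _ _).1 hx
  rw [Finset.sum_apply]
  refine Finset.sum_congr rfl fun K hK => ?_
  obtain ⟨y, hy, hyg⟩ := hg hK
  rw [← hyg, nsmul_eq_mul, ← apply_eq_ind_of_mem_RPPfund hy hp hpmax]
  rfl

theorem card_inter_eq_of_sum_mem_RPPmarked [Fintype P] {α : Set P → ℕ}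
    (hmax : ∀ p ∈ Pstar, ∀ q : P, ¬ lt' p q)
    (hα : ∀ K₁ K₂ : Set P, α K₁ ≠ 0 → α K₂ ≠ 0 → K₁ ⊆ K₂ ∨ K₂ ⊆ K₁)
    {J : Fin (∑ K ∈ (Set.toFinite (idealsOn lt Pstar)).toFinset, α K) → Set P} (hJ : Monotone J)
    (hx : ∑ i, ind (maxElems lt' (J i)) ∈ RPPmarked lt lt' Pstar α) {K : Set P}
    (hK : K ∈ idealsOn lt Pstar) : Nat.card {i // J i ∩ Pstar = K} = α K := by
  obtain ⟨L, hL, hLmem, hLcard⟩ := exists_monotone_card_fiber_eq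
    (Set.toFinite (idealsOn lt Pstar)).toFinset α fun K₁ _ K₂ _ => hα K₁ K₂
  have hLsub (i) : L i ⊆ Pstar := ((Set.Finite.mem_toFinset _).1 (hLmem i)).1
  have hJmono : Monotone fun i => J i ∩ Pstar :=
    fun i j hij => Set.inter_subset_inter_left _ (hJ hij)
  have hJL : (fun i => J i ∩ Pstar) = L := by
    refine eq_of_sum_ind_eq_of_monotone hJmono hL (funext fun p => ?_)
    rw [Finset.sum_apply, Finset.sum_apply]
    by_cases hp : p ∈ Pstar
    · calc ∑ i, ind (J i ∩ Pstar) p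
          = ∑ i, ind (maxElems lt' (J i)) p := Finset.sum_congr rfl fun i _ =>
            ind_congr ((and_iff_left hp).trans (mem_maxElems_iff (hmax p hp)).symm)
        _ = ∑ K ∈ (Set.toFinite (idealsOn lt Pstar)).toFinset, α K • ind K p := by
            rw [← apply_eq_sum_of_mem_RPPmarked hx hp (hmax p hp), Finset.sum_apply]
        _ = ∑ i, ind (L i) p :=
            (sum_comp_eq_sum_nsmul_of_card_fiber hLmem hLcard fun K => ind K p).symm
    · exact Finset.sum_congr rfl fun i _ =>
        ind_congr (iff_of_false (fun h => hp h.2) fun h => hp (hLsub i h))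
  rw [← hLcard K ((Set.Finite.mem_toFinset _).2 hK), ← hJL]

end Marked

theorem stmt14_general {P : Type*} [Fintype P] {lt lt' : P → P → Prop}
    (hlt'irr : ∀ p, ¬ lt' p p) (hlt'tr : ∀ a b c, lt' a b → lt' b c → lt' a c)
    (hweak : ∀ p q, lt' p q → lt p q)
    (hstar : ∀ J₁ J₂ : Set P, IsLowerIdeal lt J₁ → IsLowerIdeal lt J₂ →
      IsLowerIdeal lt (starOp lt' J₁ J₂))
    {Pstar : Set P} (hiii : ∀ p ∈ Pstar, ∀ q : P, ¬ lt' p q) {α : Set P → ℕ}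
    (hαchain : ∀ K₁ K₂ : Set P, α K₁ ≠ 0 → α K₂ ≠ 0 → K₁ ⊆ K₂ ∨ K₂ ⊆ K₁)
    {x : P → ℤ} (hx : (fun p => (x p : ℝ)) ∈ RPPmarked lt lt' Pstar α) :
    ∃! J : Fin (∑ K ∈ (Set.toFinite (idealsOn lt Pstar)).toFinset, α K) → Set P,
      ((∀ i, IsLowerIdeal lt (J i)) ∧ Monotone J ∧
        (∀ K ∈ idealsOn lt Pstar, Nat.card {i // J i ∩ Pstar = K} = α K) ∧
        (fun p => (x p : ℝ)) = ∑ i, ind (maxElems lt' (J i))) := by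
  have : IsStrictOrder P lt' := { irrefl := hlt'irr, trans := hlt'tr }
  obtain ⟨J, ⟨hJ, hmono, hxJ⟩, hunique⟩ := existsUnique_monotone_sum_ind_maxElems hweak hstar
    (RPPmarked_subset_dilate_RPP lt lt' Pstar α hx)
  refine ⟨J, ⟨hJ, hmono, fun K hK => ?_, hxJ⟩, ?_⟩
  · exact card_inter_eq_of_sum_mem_RPPmarked hiii hαchain hmono (hxJ ▸ hx) hK
  · rintro J' ⟨hJ', hmono', -, hxJ'⟩
    exact hunique J' ⟨hJ', hmono', hxJ'⟩

/-- For a nonnegative dominant marking `λ` with decomposition coefficients `α` and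
`S = Σ_K α_K`, every integer point of `R_λ(P, lt, lt')` is uniquely
`1_{max_{lt'} J_1} + ⋯ + 1_{max_{lt'} J_S}` for a weakly increasing tuple `J_1 ⊆ ⋯ ⊆ J_S`
in `𝒥` with exactly `α_K` of the `J_i` satisfying `J_i ∩ P* = K`, for every `K ∈ 𝒥*`. -/
theorem stmt14 {P : Type*} [Fintype P] (lt lt' : P → P → Prop)
    (hltirr : ∀ p, ¬ lt p p) (hlttr : ∀ a b c, lt a b → lt b c → lt a c)
    (hlt'irr : ∀ p, ¬ lt' p p) (hlt'tr : ∀ a b c, lt' a b → lt' b c → lt' a c)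
    (hweak : ∀ p q, lt' p q → lt p q)
    (hstar : ∀ J1 J2 : Set P, IsLowerIdeal lt J1 → IsLowerIdeal lt J2 →
      IsLowerIdeal lt (starOp lt' J1 J2))
    (Pstar : Set P)
    (hmin : ∀ p : P, (∀ q, ¬ lt q p) → p ∈ Pstar)
    (hmax : ∀ p : P, (∀ q, ¬ lt p q) → p ∈ Pstar)
    (hiii : ∀ p ∈ Pstar, ∀ q : P, ¬ lt' p q)
    (lam : P → ℤ) (α : Set P → ℕ)
    (hlamnn : ∀ p ∈ Pstar, 0 ≤ lam p)
    (hdom : ∀ p q : P, p ∈ Pstar → q ∈ Pstar → lt p q → lam q ≤ lam p)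
    (hαsupp : ∀ K : Set P, α K ≠ 0 → K ∈ idealsOn lt Pstar ∧ K.Nonempty)
    (hαchain : ∀ K1 K2 : Set P, α K1 ≠ 0 → α K2 ≠ 0 → K1 ⊆ K2 ∨ K2 ⊆ K1)
    (hαsum : ∀ p ∈ Pstar, lam p =
      ∑ K ∈ (Set.toFinite (idealsOn lt Pstar)).toFinset, (α K : ℤ) * K.indicator 1 p)
    (x : P → ℤ) (hx : (fun p => (x p : ℝ)) ∈ RPPmarked lt lt' Pstar α) :
    ∃! J : Fin (∑ K ∈ (Set.toFinite (idealsOn lt Pstar)).toFinset, α K) → Set P,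
      ((∀ i, IsLowerIdeal lt (J i)) ∧ Monotone J ∧
        (∀ K ∈ idealsOn lt Pstar, Nat.card {i // J i ∩ Pstar = K} = α K) ∧
        (fun p => (x p : ℝ)) = ∑ i, ind (maxElems lt' (J i))) :=
  stmt14_general hlt'irr hlt'tr hweak hstar hiii hαchain hx
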